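/- For every p ∈ (1,∞) there exists c_p ∈ (0,∞) such that for every n,d,m ∈ ℕ with d + m ≤ n and every function f : {-1,1}^n → ℂ of degree at most d + m which is also in the d-th tail space, ‖∇f‖_{L_p} ≥ c_p · √(d/m) · ‖f‖_{L_p}. -/

import Mathlib

open scoped BigOperators ENNReal NNReal

noncomputable section

namespace HammingCube

variable {X : Type*} [NormedAddCommGroup X] [NormedSpace ℂ X]

/-- The sign ±1 associated to a boolean coordinate. -/
def sgn (b : Bool) : ℝ := if b then 1 else -1

/-- The Walsh function `w_A(ε) = ∏_{i ∈ A} ε_i`. -/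
def walsh {n : ℕ} (A : Finset (Fin n)) (ε : Fin n → Bool) : ℝ := ∏ i ∈ A, sgn (ε i)

/-- The Fourier–Walsh coefficient `f̂(A) = 2⁻ⁿ ∑_δ f(δ) w_A(δ)`. -/
def coeff {n : ℕ} (f : (Fin n → Bool) → X) (A : Finset (Fin n)) : X :=
  (2 ^ n : ℝ)⁻¹ • ∑ δ : Fin n → Bool, walsh A δ • f δ

/-- `f` has degree at most `d`: `f̂(A) = 0` whenever `|A| > d`. -/
def degLE {n : ℕ} (f : (Fin n → Bool) → X) (d : ℕ) : Prop :=
  ∀ A : Finset (Fin n), d < A.card → coeff f A = 0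

/-- `f` belongs to the `d`-th tail space: `f̂(A) = 0` whenever `|A| < d`. -/
def tailSpace {n : ℕ} (f : (Fin n → Bool) → X) (d : ℕ) : Prop :=
  ∀ A : Finset (Fin n), A.card < d → coeff f A = 0

/-- The heat semigroup `e^{-tΔ} f = ∑_A e^{-t|A|} f̂(A) w_A`. -/
def heat {n : ℕ} (t : ℝ) (f : (Fin n → Bool) → X) : (Fin n → Bool) → X :=
  fun ε => ∑ A : Finset (Fin n), Real.exp (-t * A.card) • walsh A ε • coeff f A

/-- The hypercube Laplacian `Δ f = ∑_A |A| f̂(A) w_A`. -/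
def lap {n : ℕ} (f : (Fin n → Bool) → X) : (Fin n → Bool) → X :=
  fun ε => ∑ A : Finset (Fin n), (A.card : ℝ) • walsh A ε • coeff f A

/-- The fractional Laplacian `Δ^γ f = ∑_A |A|^γ f̂(A) w_A`. -/
def fracLap {n : ℕ} (γ : ℝ) (f : (Fin n → Bool) → X) : (Fin n → Bool) → X :=
  fun ε => ∑ A : Finset (Fin n), ((A.card : ℝ) ^ γ) • walsh A ε • coeff f A

/-- The `i`-th discrete partial derivative. -/
def pderiv {n : ℕ} (i : Fin n) (f : (Fin n → Bool) → X) : (Fin n → Bool) → X :=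
  fun ε => (2 : ℝ)⁻¹ • (f ε - f (Function.update ε i (!(ε i))))

/-- The vector-valued `L_p` norm `(2⁻ⁿ ∑_ε ‖f(ε)‖^p)^{1/p}` for finite `p`. -/
def lpNorm {n : ℕ} {Y : Type*} [NormedAddCommGroup Y] (p : ℝ)
    (f : (Fin n → Bool) → Y) : ℝ :=
  ((2 ^ n : ℝ)⁻¹ * ∑ ε : Fin n → Bool, ‖f ε‖ ^ p) ^ (1 / p)

/-- The `L_∞` norm `max_ε ‖f(ε)‖`. -/
def linfNorm {n : ℕ} {Y : Type*} [NormedAddCommGroup Y]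
    (f : (Fin n → Bool) → Y) : ℝ :=
  ⨆ ε : Fin n → Bool, ‖f ε‖

/-- The `L_p` norm for `p ∈ [1,∞]` encoded as `p : ℝ≥0∞`. -/
def lpNormE {n : ℕ} {Y : Type*} [NormedAddCommGroup Y] (p : ℝ≥0∞)
    (f : (Fin n → Bool) → Y) : ℝ :=
  if p = ⊤ then linfNorm f else lpNorm p.toReal f

/-- The scalar `L_p` norm of the gradient `‖(∑_i |∂_i f|²)^{1/2}‖_{L_p}`. -/
def gradLpNorm {n : ℕ} (p : ℝ) (f : (Fin n → Bool) → ℂ) : ℝ :=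
  lpNorm p (fun ε => Real.sqrt (∑ i : Fin n, ‖pderiv i f ε‖ ^ 2))

/-- The Rademacher projection `Rad f(ε) = ∑_i f̂({i}) ε_i`. -/
def Rad {n : ℕ} (f : (Fin n → Bool) → X) : (Fin n → Bool) → X :=
  fun ε => ∑ i : Fin n, sgn (ε i) • coeff f {i}

/-- A complex Banach space is `K`-convex if the Rademacher projections are uniformly
bounded on `L_q` for some `q ∈ (1,∞)`. -/
def KConvex (X : Type*) [NormedAddCommGroup X] [NormedSpace ℂ X] : Prop :=
  ∃ q : ℝ, 1 < q ∧ ∃ M : ℝ, ∀ (n : ℕ) (f : (Fin n → Bool) → X),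
    lpNorm q (Rad f) ≤ M * lpNorm q f

/-- `X` has cotype `q` with constant `C`. -/
def HasCotype (X : Type*) [NormedAddCommGroup X] [NormedSpace ℂ X] (q C : ℝ) : Prop :=
  ∀ (n : ℕ) (x : Fin n → X),
    C⁻¹ * (∑ i : Fin n, ‖x i‖ ^ q) ^ (1 / q) ≤
      ((2 ^ n : ℝ)⁻¹ * ∑ ε : Fin n → Bool, ‖∑ i : Fin n, sgn (ε i) • x i‖ ^ q) ^ (1 / q)

/-- The entropy `Ent(h)` of a nonnegative function on the cube. -/
def entropy {n : ℕ} (h : (Fin n → Bool) → ℝ) : ℝ :=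
  (2 ^ n : ℝ)⁻¹ * ∑ ε : Fin n → Bool, h ε * Real.log (h ε) -
    ((2 ^ n : ℝ)⁻¹ * ∑ ε : Fin n → Bool, h ε) *
      Real.log ((2 ^ n : ℝ)⁻¹ * ∑ ε : Fin n → Bool, h ε)

/-- The `L_∞` norm of the gradient `max_ε (∑_i |∂_i f(ε)|²)^{1/2}`. -/
def gradLinfNorm {n : ℕ} (f : (Fin n → Bool) → ℂ) : ℝ :=
  ⨆ ε : Fin n → Bool, Real.sqrt (∑ i : Fin n, ‖pderiv i f ε‖ ^ 2)


/-! ### Scalar extrapolation lemma -/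

lemma prod_erase_abs_sub (m j : ℕ) (hj : j ≤ m) :
    ∏ i ∈ (Finset.range (m + 1)).erase j, |(j : ℝ) - i| = (j.factorial : ℝ) * (m - j).factorial := by
  induction m, hj using Nat.le_induction with
  | base =>
    have h1 : (Finset.range (j + 1)).erase j = Finset.range j := by
      ext x; simp; omega
    rw [h1, Nat.sub_self, Nat.factorial_zero, Nat.cast_one, mul_one,
      ← Finset.prod_range_add_one_eq_factorial, Nat.cast_prod,
      ← Finset.prod_range_reflect (fun i : ℕ => ((i + 1 : ℕ) : ℝ))]
    refine Finset.prod_congr rfl fun i hi => ?_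
    have hi' : i < j := Finset.mem_range.1 hi
    have : (((j - 1 - i + 1 : ℕ)) : ℝ) = (j : ℝ) - i := by
      rw [← Nat.cast_sub hi'.le]; congr 1; omega
    rw [this, abs_of_nonneg]
    have : (i : ℝ) < j := by exact_mod_cast hi'
    linarith
  | succ m hjm ih =>
    have h1 : (Finset.range (m + 1 + 1)).erase j = insert (m + 1) ((Finset.range (m + 1)).erase j) := by
      ext x; simp; omega
    rw [h1, Finset.prod_insert (by simp), ih, Nat.sub_add_comm hjm, Nat.factorial_succ, Nat.cast_mul]
    have h2 : (j : ℝ) ≤ m := by exact_mod_cast hjm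
    have : |(j : ℝ) - ((m + 1 : ℕ) : ℝ)| = ((m - j + 1 : ℕ) : ℝ) := by
      push_cast [Nat.cast_sub hjm]
      rw [abs_sub_comm, abs_of_nonneg] <;> linarith
    rw [this]; ring

lemma exp_num : 44 * Real.exp (-8) ≤ 1 / 2 := by
  have h : Real.exp (-8) = (Real.exp 1 ^ 8)⁻¹ := by
    rw [← Real.exp_nat_mul, ← Real.exp_neg]; norm_num
  have h2 : (2 : ℝ) ≤ Real.exp 1 := by have := Real.add_one_le_exp (1 : ℝ); linarith
  have h3 : (2.7 : ℝ) ≤ Real.exp 1 := by have := Real.exp_one_gt_d9; linarith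
  have h4 : (2.7 : ℝ) ^ 8 ≤ Real.exp 1 ^ 8 := by gcongr
  rw [h]
  have h5 : (Real.exp 1 ^ 8)⁻¹ ≤ ((2.7 : ℝ) ^ 8)⁻¹ := by gcongr
  refine (mul_le_mul_of_nonneg_left h5 (by norm_num)).trans ?_
  norm_num

lemma extrapolation (d m : ℕ) (hd : 1 ≤ d) (hm : 1 ≤ m) :
    ∃ ρ c : ℕ → ℝ, (∀ j ∈ Finset.range (m + 1), 0 ≤ ρ j ∧ ρ j ≤ 1) ∧
      ∑ j ∈ Finset.range (m + 1), |c j| ≤ 1 / 2 ∧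
      ∀ k, d ≤ k → k ≤ d + m → (Real.exp (-(10 * m / d))) ^ k =
        ∑ j ∈ Finset.range (m + 1), c j * ρ j ^ k := by
  have hd' : (1 : ℝ) ≤ d := by exact_mod_cast hd
  have hm' : (1 : ℝ) ≤ m := by exact_mod_cast hm
  set r : ℝ := Real.exp (-(10 * m / d)) with hr
  have hr0 : 0 < r := Real.exp_pos _
  have hN : (0 : ℝ) < 2 * (d + m) := by linarith
  set ρ : ℕ → ℝ := fun j => 1 - j / (2 * (d + m)) with hρ
  have hjm : ∀ j ∈ Finset.range (m + 1), (j : ℝ) ≤ m := by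
    intro j hj
    exact_mod_cast Nat.lt_succ_iff.1 (Finset.mem_range.1 hj)
  have hρ1 : ∀ j ∈ Finset.range (m + 1), (2 * d + m) / (2 * (d + m)) ≤ ρ j ∧ ρ j ≤ 1 := by
    intro j hj
    have := hjm j hj
    refine ⟨?_, ?_⟩
    · simp only [hρ]
      rw [le_sub_iff_add_le, ← add_div, div_le_one hN]
      linarith
    · simp only [hρ]
      have : (0 : ℝ) ≤ j / (2 * (d + m)) := by positivity
      linarith
  have hρpos : ∀ j ∈ Finset.range (m + 1), 0 < ρ j := fun j hj =>
    lt_of_lt_of_le (by positivity) (hρ1 j hj).1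
  have hinj : Set.InjOn ρ (Finset.range (m + 1)) := by
    intro a _ b _ hab
    simp only [hρ] at hab
    have : (a : ℝ) / (2 * (d + m)) = b / (2 * (d + m)) := by linarith
    rw [div_left_inj' hN.ne'] at this
    exact_mod_cast this
  set ℓ : ℕ → ℝ := fun j => (Lagrange.basis (Finset.range (m + 1)) ρ j).eval r with hℓ
  have hℓb : ∀ j ∈ Finset.range (m + 1), |ℓ j| ≤ (22 * m) ^ m / ((j.factorial : ℝ) * (m - j).factorial) := by
    intro j hj
    have hjle : j ≤ m := Nat.lt_succ_iff.1 (Finset.mem_range.1 hj)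
    rw [← prod_erase_abs_sub m j hjle]
    have hc : ((Finset.range (m + 1)).erase j).card = m := by
      rw [Finset.card_erase_of_mem hj]; simp
    have hpow : ((22 * m : ℝ)) ^ m = ∏ i ∈ (Finset.range (m + 1)).erase j, (22 * m : ℝ) := by
      rw [Finset.prod_const, hc]
    rw [hpow, ← Finset.prod_div_distrib]
    simp only [hℓ, Lagrange.basis, Lagrange.basisDivisor, Polynomial.eval_prod, Finset.abs_prod]
    refine Finset.prod_le_prod (fun _ _ => abs_nonneg _) fun i hi => ?_
    have hij : i ≠ j := (Finset.mem_erase.1 hi).1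
    have hi' := (Finset.mem_erase.1 hi).2
    have hij' : (j : ℝ) - i ≠ 0 := by
      rw [sub_ne_zero]; exact_mod_cast hij.symm
    simp only [Polynomial.eval_mul, Polynomial.eval_C, Polynomial.eval_sub, Polynomial.eval_X]
    rw [abs_mul, abs_inv]
    have e1 : |ρ j - ρ i| = |(j : ℝ) - i| / (2 * (d + m)) := by
      have : ρ j - ρ i = -(((j : ℝ) - i) / (2 * (d + m))) := by simp only [hρ]; ring
      rw [this, abs_neg, abs_div, abs_of_pos hN]
    have e2 : |r - ρ i| ≤ 11 * m / (d + m) := by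
      rw [le_div_iff₀ (by linarith)]
      have hr1 : 1 - r ≤ 10 * m / d := by
        have := Real.add_one_le_exp (-(10 * m / d : ℝ)); linarith
      have hr1' : (1 - r) * d ≤ 10 * m := by
        rwa [le_div_iff₀ (by linarith)] at hr1
      have hr2 : r ≤ 1 := by rw [hr, Real.exp_le_one_iff]; have : (0:ℝ) ≤ 10 * m / d := by positivity
                             linarith
      have hb := hρ1 i hi'
      have hi2 := hjm i hi'
      have h3 : (1 - ρ i) * (d + m) ≤ 11 * m := by
        simp only [hρ]
        have : (1 - (1 - (i : ℝ) / (2 * (d + m)))) * (d + m) = i / 2 := by field_simp; ring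
        rw [this]; linarith
      have h4 : (1 - r) * (d + m) ≤ 11 * m := by nlinarith
      have h5 : |r - ρ i| ≤ max (1 - r) (1 - ρ i) := by
        rw [abs_le]
        constructor
        · have := le_max_left (1 - r) (1 - ρ i); linarith
        · have := le_max_right (1 - r) (1 - ρ i); linarith
      refine (mul_le_mul_of_nonneg_right h5 (by linarith)).trans ?_
      rcases max_cases (1 - r) (1 - ρ i) with h | h <;> rw [h.1] <;> assumption
    rw [e1]
    have hp : 0 < |(j : ℝ) - i| := abs_pos.2 hij'
    calc (|(j : ℝ) - i| / (2 * (d + m)))⁻¹ * |r - ρ i|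
        ≤ (|(j : ℝ) - i| / (2 * (d + m)))⁻¹ * (11 * m / (d + m)) := by gcongr
      _ = 22 * m / |(j : ℝ) - i| := by field_simp; ring
  refine ⟨ρ, fun j => (r / ρ j) ^ d * ℓ j, fun j hj => ⟨(hρpos j hj).le, (hρ1 j hj).2⟩, ?_, ?_⟩
  · have hq : ∀ j ∈ Finset.range (m + 1), (r / ρ j) ^ d ≤ Real.exp (-9) ^ m := by
      intro j hj
      have h1 : r / ρ j ≤ Real.exp (-(9 * m / d)) := by
        rw [div_le_iff₀ (hρpos j hj)]
        have h2 : Real.exp (-(m / d : ℝ)) ≤ ρ j := by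
          refine le_trans ?_ (hρ1 j hj).1
          rw [Real.exp_neg, inv_le_comm₀ (Real.exp_pos _) (by positivity), inv_div]
          refine le_trans ?_ (Real.add_one_le_exp _)
          rw [div_le_iff₀ (by positivity)]
          have : ((m : ℝ) / d + 1) * (2 * d + m) = 2 * (d + m) + m + m ^ 2 / d := by
            field_simp; ring
          rw [this]
          have : (0 : ℝ) ≤ m ^ 2 / d := by positivity
          linarith
        calc r = Real.exp (-(9 * m / d)) * Real.exp (-(m / d : ℝ)) := by
              rw [hr, ← Real.exp_add]; congr 1; ring
          _ ≤ _ := by gcongr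
      calc (r / ρ j) ^ d ≤ Real.exp (-(9 * m / d)) ^ d := by
            have := (hρpos j hj); gcongr
        _ = Real.exp (-9) ^ m := by
            rw [← Real.exp_nat_mul, ← Real.exp_nat_mul]; congr 1; field_simp
    calc ∑ j ∈ Finset.range (m + 1), |(r / ρ j) ^ d * ℓ j|
        ≤ ∑ j ∈ Finset.range (m + 1), Real.exp (-9) ^ m *
            ((22 * m) ^ m / ((j.factorial : ℝ) * (m - j).factorial)) := by
          refine Finset.sum_le_sum fun j hj => ?_
          rw [abs_mul, abs_of_nonneg (a := (r / ρ j) ^ d) (by have := hρpos j hj; positivity)]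
          exact mul_le_mul (hq j hj) (hℓb j hj) (abs_nonneg _) (by positivity)
      _ = ∑ j ∈ Finset.range (m + 1), Real.exp (-9) ^ m * 22 ^ m * (m ^ m / m.factorial) * (m.choose j : ℝ) := by
          refine Finset.sum_congr rfl fun j hj => ?_
          rw [Nat.cast_choose ℝ (Nat.lt_succ_iff.1 (Finset.mem_range.1 hj)), mul_pow]
          field_simp
      _ = Real.exp (-9) ^ m * 22 ^ m * (m ^ m / m.factorial) * 2 ^ m := by
          rw [← Finset.mul_sum, ← Nat.cast_sum, Nat.sum_range_choose]; push_cast; rfl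
      _ ≤ Real.exp (-9) ^ m * 22 ^ m * (Real.exp 1 ^ m) * 2 ^ m := by
          have := Real.pow_div_factorial_le_exp (m : ℝ) (by positivity) m
          rw [← Real.exp_nat_mul 1 m, mul_one]
          gcongr
      _ = (44 * Real.exp (-8)) ^ m := by
          rw [← mul_pow, ← mul_pow, ← mul_pow]; congr 1
          have : Real.exp (-8) = Real.exp (-9) * Real.exp 1 := by rw [← Real.exp_add]; norm_num
          rw [this]; ring
      _ ≤ (1 / 2) ^ m := by gcongr; exact exp_num
      _ ≤ (1 / 2) ^ 1 := pow_le_pow_of_le_one (by norm_num) (by norm_num) hm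
      _ = 1 / 2 := by norm_num
  · intro k hdk hk
    obtain ⟨e, rfl⟩ := Nat.exists_eq_add_of_le hdk
    have he : e ≤ m := by omega
    have hI := Lagrange.eq_interpolate (s := Finset.range (m + 1)) (v := ρ)
      (f := (Polynomial.X : Polynomial ℝ) ^ e) hinj (by
        rw [Polynomial.degree_X_pow, Finset.card_range]; exact_mod_cast Nat.lt_succ_of_le he)
    have hI2 := congrArg (Polynomial.eval r) hI
    rw [Lagrange.interpolate_apply, Polynomial.eval_finsetSum] at hI2
    simp only [Polynomial.eval_mul, Polynomial.eval_C, Polynomial.eval_pow, Polynomial.eval_X] at hI2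
    rw [pow_add, hI2, Finset.mul_sum]
    refine Finset.sum_congr rfl fun j hj => ?_
    have := hρpos j hj
    simp only [hℓ]
    rw [div_pow, pow_add]
    field_simp

/-! ### The kernel of the heat semigroup -/

lemma sgn_mul_self (b : Bool) : sgn b * sgn b = 1 := by cases b <;> simp [sgn]

lemma sgn_not (b : Bool) : sgn (!b) = - sgn b := by cases b <;> simp [sgn]

lemma abs_sgn (b : Bool) : |sgn b| = 1 := by cases b <;> simp [sgn]

/-- Flip the `i`-th coordinate. -/
def flp {n : ℕ} (i : Fin n) (x : Fin n → Bool) : Fin n → Bool := Function.update x i (!(x i))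

lemma flp_flp {n : ℕ} (i : Fin n) (x : Fin n → Bool) : flp i (flp i x) = x := by
  simp [flp]

lemma flp_same {n : ℕ} (i : Fin n) (x : Fin n → Bool) : flp i x i = !(x i) := by
  simp [flp]

lemma flp_ne {n : ℕ} {i j : Fin n} (h : j ≠ i) (x : Fin n → Bool) : flp i x j = x j := by
  simp [flp, h]

lemma flp_bij {n : ℕ} (i : Fin n) : Function.Bijective (flp i : (Fin n → Bool) → _) :=
  Function.Involutive.bijective (flp_flp i)

lemma sum_flp {n : ℕ} {E : Type*} [AddCommMonoid E] (i : Fin n) (g : (Fin n → Bool) → E) :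
    ∑ x, g (flp i x) = ∑ x, g x :=
  (flp_bij i).sum_comp g

/-- The heat kernel. -/
def ker {n : ℕ} (r : ℝ) (x y : Fin n → Bool) : ℝ := ∏ i, ((1 + r * (sgn (x i) * sgn (y i))) / 2)

/-- The noise operator. -/
def noise {n : ℕ} {E : Type*} [AddCommMonoid E] [Module ℝ E] (r : ℝ) (f : (Fin n → Bool) → E) :
    (Fin n → Bool) → E := fun x => ∑ y, ker r x y • f y

lemma ker_symm {n : ℕ} (r : ℝ) (x y : Fin n → Bool) : ker r x y = ker r y x := by
  unfold ker
  refine Finset.prod_congr rfl fun i _ => ?_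
  rw [mul_comm (sgn (x i))]

lemma ker_nonneg {n : ℕ} {r : ℝ} (h0 : 0 ≤ r) (h1 : r ≤ 1) (x y : Fin n → Bool) :
    0 ≤ ker r x y := by
  refine Finset.prod_nonneg fun i _ => ?_
  cases x i <;> cases y i <;> simp [sgn] <;> linarith

lemma ker_flp {n : ℕ} (r : ℝ) (i : Fin n) (x y : Fin n → Bool) :
    ker r (flp i x) (flp i y) = ker r x y := by
  unfold ker
  refine Finset.prod_congr rfl fun j _ => ?_
  by_cases h : j = i
  · subst h; rw [flp_same, flp_same, sgn_not, sgn_not]; ring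
  · rw [flp_ne h, flp_ne h]

lemma walsh_eq {n : ℕ} (A : Finset (Fin n)) (x : Fin n → Bool) :
    walsh A x = ∏ i, (if i ∈ A then sgn (x i) else 1) := by
  unfold walsh
  rw [Finset.prod_ite_mem, Finset.univ_inter]

lemma sum_ker_walsh {n : ℕ} (r : ℝ) (x : Fin n → Bool) (A : Finset (Fin n)) :
    ∑ y, ker r x y * walsh A y = r ^ A.card * walsh A x := by
  simp only [walsh_eq, ker, ← Finset.prod_mul_distrib]
  rw [← Fintype.prod_sum (fun i b => ((1 + r * (sgn (x i) * sgn b)) / 2) * (if i ∈ A then sgn b else 1))]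
  have : r ^ A.card = ∏ i, (if i ∈ A then r else 1) := by
    rw [Finset.prod_ite_mem, Finset.univ_inter, Finset.prod_const]
  rw [this, ← Finset.prod_mul_distrib]
  refine Finset.prod_congr rfl fun i _ => ?_
  rw [Fintype.sum_bool]
  by_cases h : i ∈ A <;> simp only [h, if_true, if_false] <;> cases x i <;> simp [sgn] <;> ring

lemma sum_ker {n : ℕ} (r : ℝ) (x : Fin n → Bool) : ∑ y, ker r x y = 1 := by
  have := sum_ker_walsh r x ∅
  simpa [walsh] using this

lemma sum_ker' {n : ℕ} (r : ℝ) (y : Fin n → Bool) : ∑ x, ker r x y = 1 := by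
  simp_rw [ker_symm r _ y]; exact sum_ker r y

lemma ker_expand {n : ℕ} (r : ℝ) (x y : Fin n → Bool) :
    ker r x y = (2 ^ n : ℝ)⁻¹ * ∑ A : Finset (Fin n), r ^ A.card * walsh A x * walsh A y := by
  unfold ker
  rw [Finset.prod_div_distrib, Finset.prod_one_add, Finset.prod_const, Finset.card_univ,
    Fintype.card_fin, div_eq_inv_mul, Finset.powerset_univ]
  congr 1
  refine Finset.sum_congr rfl fun A _ => ?_
  rw [Finset.prod_mul_distrib, Finset.prod_mul_distrib, Finset.prod_const]
  simp only [walsh]; ring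

lemma noise_one {n : ℕ} {E : Type*} [AddCommGroup E] [Module ℝ E] (f : (Fin n → Bool) → E) :
    noise 1 f = f := by
  funext x
  unfold noise
  rw [Finset.sum_eq_single x]
  · have : ker 1 x x = 1 := by
      unfold ker
      refine Finset.prod_eq_one fun i _ => ?_
      rw [sgn_mul_self]; norm_num
    rw [this, one_smul]
  · intro y _ hy
    obtain ⟨i, hi⟩ := Function.ne_iff.1 hy
    have : ker 1 x y = 0 := by
      unfold ker
      refine Finset.prod_eq_zero (Finset.mem_univ i) ?_
      revert hi
      cases x i <;> cases y i <;> simp [sgn]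
    rw [this, zero_smul]
  · simp

lemma sum_noise {n : ℕ} (r : ℝ) (u : (Fin n → Bool) → ℝ) : ∑ x, noise r u x = ∑ x, u x := by
  unfold noise
  rw [Finset.sum_comm]
  refine Finset.sum_congr rfl fun y _ => ?_
  rw [← Finset.sum_smul, sum_ker', one_smul]

/-- Jensen for the noise operator. -/
lemma noise_rpow {n : ℕ} {r : ℝ} (h0 : 0 ≤ r) (h1 : r ≤ 1) {s : ℝ} (hs : 1 ≤ s)
    (u : (Fin n → Bool) → ℝ) (hu : ∀ x, 0 ≤ u x) (x : Fin n → Bool) :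
    (noise r u x) ^ s ≤ noise r (fun y => u y ^ s) x := by
  unfold noise
  simp only [smul_eq_mul]
  exact Real.rpow_arith_mean_le_arith_mean_rpow _ _ _ (fun y _ => ker_nonneg h0 h1 x y)
    (sum_ker r x) (fun y _ => hu y) hs

lemma norm_noise_le {n : ℕ} {r : ℝ} (h0 : 0 ≤ r) (h1 : r ≤ 1)
    (f : (Fin n → Bool) → ℂ) (x : Fin n → Bool) :
    ‖noise r f x‖ ≤ noise r (fun y => ‖f y‖) x := by
  unfold noise
  refine (norm_sum_le _ _).trans (Finset.sum_le_sum fun y _ => ?_)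
  rw [norm_smul, Real.norm_of_nonneg (ker_nonneg h0 h1 x y), smul_eq_mul]

lemma noise_nonneg {n : ℕ} {r : ℝ} (h0 : 0 ≤ r) (h1 : r ≤ 1)
    (u : (Fin n → Bool) → ℝ) (hu : ∀ x, 0 ≤ u x) (x : Fin n → Bool) : 0 ≤ noise r u x :=
  Finset.sum_nonneg fun y _ => mul_nonneg (ker_nonneg h0 h1 x y) (hu y)

lemma norm_noise_rpow {n : ℕ} {r : ℝ} (h0 : 0 ≤ r) (h1 : r ≤ 1) {s : ℝ} (hs : 1 ≤ s)
    (f : (Fin n → Bool) → ℂ) (x : Fin n → Bool) :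
    ‖noise r f x‖ ^ s ≤ noise r (fun y => ‖f y‖ ^ s) x :=
  (Real.rpow_le_rpow (norm_nonneg _) (norm_noise_le h0 h1 f x) (by linarith)).trans
    (noise_rpow h0 h1 hs _ (fun _ => norm_nonneg _) x)

lemma sum_norm_noise_rpow {n : ℕ} {r : ℝ} (h0 : 0 ≤ r) (h1 : r ≤ 1) {s : ℝ} (hs : 1 ≤ s)
    (f : (Fin n → Bool) → ℂ) :
    ∑ x, ‖noise r f x‖ ^ s ≤ ∑ x, ‖f x‖ ^ s :=
  (Finset.sum_le_sum fun x _ => norm_noise_rpow h0 h1 hs f x).trans (sum_noise r _).le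

lemma pderiv_eq {n : ℕ} (i : Fin n) (f : (Fin n → Bool) → ℂ) (x : Fin n → Bool) :
    pderiv i f x = (2 : ℝ)⁻¹ • (f x - f (flp i x)) := rfl

lemma noise_flp {n : ℕ} (r : ℝ) (i : Fin n) (f : (Fin n → Bool) → ℂ) (x : Fin n → Bool) :
    noise r f (flp i x) = noise r (fun y => f (flp i y)) x := by
  unfold noise
  rw [← sum_flp i]
  simp_rw [ker_flp]

lemma pderiv_noise {n : ℕ} (r : ℝ) (i : Fin n) (f : (Fin n → Bool) → ℂ) :
    pderiv i (noise r f) = noise r (pderiv i f) := by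
  funext x
  rw [pderiv_eq, noise_flp]
  unfold noise
  rw [← Finset.sum_sub_distrib, Finset.smul_sum]
  refine Finset.sum_congr rfl fun y _ => ?_
  rw [pderiv_eq, ← smul_sub, smul_comm]

lemma walsh_flp {n : ℕ} (i : Fin n) (A : Finset (Fin n)) (x : Fin n → Bool) :
    walsh A (flp i x) = (if i ∈ A then -1 else 1) * walsh A x := by
  unfold walsh
  split_ifs with h
  · rw [← Finset.mul_prod_erase _ _ h, ← Finset.mul_prod_erase _ (fun j => sgn (x j)) h, flp_same, sgn_not]
    rw [Finset.prod_congr rfl (fun j hj => by rw [flp_ne (Finset.mem_erase.1 hj).1])]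
    ring
  · rw [one_mul]
    refine Finset.prod_congr rfl fun j hj => ?_
    rw [flp_ne]
    rintro rfl; exact h hj

lemma coeff_pderiv {n : ℕ} (i : Fin n) (f : (Fin n → Bool) → ℂ) (A : Finset (Fin n)) :
    coeff (pderiv i f) A = if i ∈ A then coeff f A else 0 := by
  have h : ∑ x, walsh A x • f (flp i x) = (if i ∈ A then (-1 : ℝ) else 1) • ∑ x, walsh A x • f x := by
    rw [← sum_flp i]
    simp_rw [flp_flp, walsh_flp, Finset.smul_sum, smul_smul]
  have h2 : ∑ x, walsh A x • pderiv i f x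
      = (2 : ℝ)⁻¹ • (∑ x, walsh A x • f x - ∑ x, walsh A x • f (flp i x)) := by
    rw [← Finset.sum_sub_distrib, Finset.smul_sum]
    refine Finset.sum_congr rfl fun x _ => ?_
    rw [pderiv_eq, ← smul_sub, smul_comm]
  unfold coeff
  rw [h2, h]
  split_ifs with hA
  · congr 1
    rw [neg_one_smul, sub_neg_eq_add, ← two_smul ℝ, smul_smul]; norm_num
  · simp

lemma noise_fourier {n : ℕ} (r : ℝ) (f : (Fin n → Bool) → ℂ) (x : Fin n → Bool) :
    noise r f x = ∑ A : Finset (Fin n), (r ^ A.card * walsh A x) • coeff f A := by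
  unfold noise coeff
  simp_rw [ker_expand, Finset.mul_sum, Finset.sum_smul, Finset.smul_sum]
  rw [Finset.sum_comm]
  refine Finset.sum_congr rfl fun A _ => Finset.sum_congr rfl fun y _ => ?_
  rw [smul_smul, smul_smul]; congr 1; ring

/-- The real pairing, on the Fourier side. -/
lemma pairing {n : ℕ} (r : ℝ) (g f : (Fin n → Bool) → ℂ) :
    ∑ x, inner ℝ (g x) (noise r f x) =
      ∑ A : Finset (Fin n), r ^ A.card * (2 ^ n * inner ℝ (coeff g A) (coeff f A)) := by
  simp_rw [noise_fourier, inner_sum, inner_smul_right]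
  rw [Finset.sum_comm]
  refine Finset.sum_congr rfl fun A _ => ?_
  have : inner ℝ (coeff g A) (coeff f A) =
      (2 ^ n : ℝ)⁻¹ * ∑ x, walsh A x * inner ℝ (g x) (coeff f A) := by
    conv_lhs => rw [coeff]
    rw [real_inner_smul_left, sum_inner]
    simp_rw [real_inner_smul_left]
  rw [this, ← mul_assoc (2 ^ n : ℝ), mul_inv_cancel₀ (by positivity), one_mul, Finset.mul_sum]
  refine Finset.sum_congr rfl fun x _ => ?_
  ring

/-- The Dirichlet form, on the Fourier side. -/
lemma dirichlet {n : ℕ} (r : ℝ) (g f : (Fin n → Bool) → ℂ) :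
    ∑ i, ∑ x, inner ℝ (pderiv i g x) (noise r (pderiv i f) x) =
      ∑ A : Finset (Fin n), (A.card : ℝ) * (r ^ A.card * (2 ^ n * inner ℝ (coeff g A) (coeff f A))) := by
  simp_rw [pairing, coeff_pderiv]
  rw [Finset.sum_comm]
  refine Finset.sum_congr rfl fun A _ => ?_
  have h : ∀ i : Fin n, r ^ A.card * (2 ^ n * inner ℝ (if i ∈ A then coeff g A else 0)
      (if i ∈ A then coeff f A else 0)) =
      if i ∈ A then r ^ A.card * (2 ^ n * inner ℝ (coeff g A) (coeff f A)) else 0 := by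
    intro i
    split_ifs <;> simp
  rw [Finset.sum_congr rfl fun i _ => h i, Finset.sum_ite_mem, Finset.univ_inter, Finset.sum_const,
    nsmul_eq_mul]

/-- Derivative of the pairing along the heat flow. -/
lemma hasDerivAt_pairing {n : ℕ} (g f : (Fin n → Bool) → ℂ) (t : ℝ) :
    HasDerivAt (fun t : ℝ => ∑ x, inner ℝ (g x) (noise (Real.exp (-t)) f x))
      (- ∑ i, ∑ x, inner ℝ (pderiv i g x) (noise (Real.exp (-t)) (pderiv i f) x)) t := by
  simp_rw [dirichlet, pairing]
  rw [← Finset.sum_neg_distrib]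
  refine HasDerivAt.fun_sum fun A _ => ?_
  have h1 : HasDerivAt (fun t : ℝ => Real.exp (-t) ^ A.card)
      (-(A.card * Real.exp (-t) ^ A.card)) t := by
    simp_rw [← Real.exp_nat_mul]
    have h : HasDerivAt (fun t : ℝ => (A.card : ℝ) * -t) ((A.card : ℝ) * -1) t :=
      ((hasDerivAt_id t).neg).const_mul _
    convert h.exp using 1
    ring
  refine (h1.mul_const (2 ^ n * inner ℝ (coeff g A) (coeff f A))).congr_deriv ?_
  ring

/-! ### Gradient bounds -/

lemma sum_ker_eta {n : ℕ} (r : ℝ) (x : Fin n → Bool) (i : Fin n) :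
    ∑ y, ker r x y * (sgn (x i) * sgn (y i)) = r := by
  have h := sum_ker_walsh r x {i}
  simp only [walsh, Finset.prod_singleton, Finset.card_singleton, pow_one] at h
  calc ∑ y, ker r x y * (sgn (x i) * sgn (y i)) = sgn (x i) * ∑ y, ker r x y * sgn (y i) := by
        rw [Finset.mul_sum]; exact Finset.sum_congr rfl fun y _ => by ring
    _ = r * (sgn (x i) * sgn (x i)) := by rw [h]; ring
    _ = r := by rw [sgn_mul_self, mul_one]

lemma sum_ker_eta_eta {n : ℕ} (r : ℝ) (x : Fin n → Bool) {i j : Fin n} (hij : i ≠ j) :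
    ∑ y, ker r x y * ((sgn (x i) * sgn (y i)) * (sgn (x j) * sgn (y j))) = r ^ 2 := by
  have h := sum_ker_walsh r x {i, j}
  simp only [walsh, Finset.prod_pair hij, Finset.card_pair hij] at h
  calc ∑ y, ker r x y * ((sgn (x i) * sgn (y i)) * (sgn (x j) * sgn (y j)))
      = sgn (x i) * sgn (x j) * ∑ y, ker r x y * (sgn (y i) * sgn (y j)) := by
        rw [Finset.mul_sum]; exact Finset.sum_congr rfl fun y _ => by ring
    _ = r ^ 2 * ((sgn (x i) * sgn (x i)) * (sgn (x j) * sgn (x j))) := by rw [h]; ring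
    _ = r ^ 2 := by rw [sgn_mul_self, sgn_mul_self, mul_one, mul_one]

lemma orth {n : ℕ} (r : ℝ) (x : Fin n → Bool) (i j : Fin n) :
    ∑ y, ker r x y * ((sgn (x i) * sgn (y i) - r) * (sgn (x j) * sgn (y j) - r)) =
      if i = j then 1 - r ^ 2 else 0 := by
  have e : ∀ y : Fin n → Bool, ker r x y * ((sgn (x i) * sgn (y i) - r) * (sgn (x j) * sgn (y j) - r)) =
      ker r x y * ((sgn (x i) * sgn (y i)) * (sgn (x j) * sgn (y j)))
      - r * (ker r x y * (sgn (x i) * sgn (y i))) - r * (ker r x y * (sgn (x j) * sgn (y j)))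
      + r ^ 2 * ker r x y := fun y => by ring
  simp_rw [e]
  rw [Finset.sum_add_distrib, Finset.sum_sub_distrib, Finset.sum_sub_distrib, ← Finset.mul_sum,
    ← Finset.mul_sum, ← Finset.mul_sum, sum_ker_eta, sum_ker_eta, sum_ker]
  split_ifs with h
  · subst h
    have : ∀ y : Fin n → Bool, ker r x y * ((sgn (x i) * sgn (y i)) * (sgn (x i) * sgn (y i)))
        = ker r x y := fun y => by
      have h1 := sgn_mul_self (x i)
      have h2 := sgn_mul_self (y i)
      calc _ = ker r x y * ((sgn (x i) * sgn (x i)) * (sgn (y i) * sgn (y i))) := by ring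
        _ = _ := by rw [h1, h2]; ring
    simp_rw [this]
    rw [sum_ker]; ring
  · rw [sum_ker_eta_eta r x h]; ring

lemma bessel {n : ℕ} {r : ℝ} (h0 : 0 ≤ r) (h1 : r < 1) (g : (Fin n → Bool) → ℂ) (x : Fin n → Bool) :
    ∑ i, ‖∑ y, (ker r x y * (sgn (x i) * sgn (y i) - r)) • g y‖ ^ 2 ≤
      (1 - r ^ 2) * noise r (fun y => ‖g y‖ ^ 2) x := by
  set a : Fin n → ℂ := fun i => ∑ y, (ker r x y * (sgn (x i) * sgn (y i) - r)) • g y with ha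
  set v : (Fin n → Bool) → ℂ := fun y => ∑ i, (sgn (x i) * sgn (y i) - r) • a i with hv
  have hs : 0 < 1 - r ^ 2 := by nlinarith
  have e1 : ∑ y, ker r x y * inner ℝ (g y) (v y) = ∑ i, ‖a i‖ ^ 2 := by
    simp only [hv, inner_sum, Finset.mul_sum]
    rw [Finset.sum_comm]
    refine Finset.sum_congr rfl fun i _ => ?_
    rw [← real_inner_self_eq_norm_sq]
    conv_rhs => enter [2]; rw [ha]
    simp only [sum_inner, real_inner_smul_left, real_inner_smul_right]
    exact Finset.sum_congr rfl fun y _ => by ring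
  have e2 : ∑ y, ker r x y * ‖v y‖ ^ 2 = (1 - r ^ 2) * ∑ i, ‖a i‖ ^ 2 := by
    have : ∀ y, ker r x y * ‖v y‖ ^ 2 = ∑ i, ∑ j, (ker r x y *
        ((sgn (x i) * sgn (y i) - r) * (sgn (x j) * sgn (y j) - r))) * inner ℝ (a i) (a j) := by
      intro y
      rw [← real_inner_self_eq_norm_sq]
      simp only [hv, sum_inner, inner_sum, real_inner_smul_left, real_inner_smul_right, Finset.mul_sum]
      exact Finset.sum_congr rfl fun i _ => Finset.sum_congr rfl fun j _ => by
        rw [real_inner_comm]; ring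
    simp_rw [this]
    rw [Finset.sum_comm, Finset.mul_sum]
    refine Finset.sum_congr rfl fun i _ => ?_
    rw [Finset.sum_comm]
    simp_rw [← Finset.sum_mul, orth]
    simp only [ite_mul, zero_mul, Finset.sum_ite_eq, Finset.mem_univ, if_true]
    rw [real_inner_self_eq_norm_sq]
  have e3 : 0 ≤ ∑ y, ker r x y * ‖(1 - r ^ 2) • g y - v y‖ ^ 2 :=
    Finset.sum_nonneg fun y _ => mul_nonneg (ker_nonneg h0 h1.le x y) (by positivity)
  have e4 : ∑ y, ker r x y * ‖(1 - r ^ 2) • g y - v y‖ ^ 2 =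
      (1 - r ^ 2) ^ 2 * noise r (fun y => ‖g y‖ ^ 2) x
        - 2 * (1 - r ^ 2) * ∑ y, ker r x y * inner ℝ (g y) (v y) + ∑ y, ker r x y * ‖v y‖ ^ 2 := by
    unfold noise
    rw [Finset.mul_sum, Finset.mul_sum, ← Finset.sum_sub_distrib, ← Finset.sum_add_distrib]
    refine Finset.sum_congr rfl fun y _ => ?_
    rw [norm_sub_sq_real, norm_smul, real_inner_smul_left, Real.norm_of_nonneg hs.le, smul_eq_mul]
    ring
  rw [e4, e1, e2] at e3
  have e5 : 0 ≤ (1 - r ^ 2) * ((1 - r ^ 2) * noise r (fun y => ‖g y‖ ^ 2) x - ∑ i, ‖a i‖ ^ 2) := by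
    linarith
  have := nonneg_of_mul_nonneg_right e5 hs
  linarith

lemma ker_diff {n : ℕ} (r : ℝ) (x y : Fin n → Bool) (i : Fin n) :
    (1 - r ^ 2) * (2⁻¹ * (ker r x y - ker r (flp i x) y)) =
      r * (ker r x y * (sgn (x i) * sgn (y i) - r)) := by
  unfold ker
  rw [← Finset.mul_prod_erase _ _ (Finset.mem_univ i),
    ← Finset.mul_prod_erase _ (fun j => (1 + r * (sgn (flp i x j) * sgn (y j))) / 2) (Finset.mem_univ i)]
  have hc : ∏ j ∈ Finset.univ.erase i, (1 + r * (sgn (flp i x j) * sgn (y j))) / 2 =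
      ∏ j ∈ Finset.univ.erase i, (1 + r * (sgn (x j) * sgn (y j))) / 2 :=
    Finset.prod_congr rfl (fun j hj => by rw [flp_ne (Finset.mem_erase.1 hj).1])
  rw [hc]
  rw [flp_same, sgn_not]
  have h : (sgn (x i) * sgn (y i)) ^ 2 = 1 := by
    rw [mul_pow, sq, sq, sgn_mul_self, sgn_mul_self, one_mul]
  linear_combination (-(r ^ 2 / 2) * ∏ j ∈ Finset.univ.erase i, (1 + r * (sgn (x j) * sgn (y j))) / 2) * h

/-- The squared gradient. -/
def grad2 {n : ℕ} (f : (Fin n → Bool) → ℂ) (x : Fin n → Bool) : ℝ := ∑ i, ‖pderiv i f x‖ ^ 2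

lemma grad2_nonneg {n : ℕ} (f : (Fin n → Bool) → ℂ) (x : Fin n → Bool) : 0 ≤ grad2 f x :=
  Finset.sum_nonneg fun _ _ => by positivity

lemma grad2_noise_le {n : ℕ} {r : ℝ} (h0 : 0 ≤ r) (h1 : r < 1) (g : (Fin n → Bool) → ℂ)
    (x : Fin n → Bool) :
    (1 - r ^ 2) * grad2 (noise r g) x ≤ r ^ 2 * noise r (fun y => ‖g y‖ ^ 2) x := by
  have hs : 0 < 1 - r ^ 2 := by nlinarith
  have e : ∀ i, (1 - r ^ 2) • pderiv i (noise r g) x =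
      r • ∑ y, (ker r x y * (sgn (x i) * sgn (y i) - r)) • g y := by
    intro i
    rw [pderiv_eq]
    unfold noise
    rw [← Finset.sum_sub_distrib, Finset.smul_sum, Finset.smul_sum, Finset.smul_sum]
    refine Finset.sum_congr rfl fun y _ => ?_
    rw [← sub_smul, smul_smul, smul_smul, smul_smul, ← ker_diff, mul_assoc]
  have e2 : (1 - r ^ 2) ^ 2 * grad2 (noise r g) x =
      r ^ 2 * ∑ i, ‖∑ y, (ker r x y * (sgn (x i) * sgn (y i) - r)) • g y‖ ^ 2 := by
    unfold grad2
    rw [Finset.mul_sum, Finset.mul_sum]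
    refine Finset.sum_congr rfl fun i _ => ?_
    have := congrArg (fun z => ‖z‖ ^ 2) (e i)
    simp only [norm_smul, mul_pow, Real.norm_eq_abs, sq_abs] at this
    exact this
  have e3 := mul_le_mul_of_nonneg_left (bessel h0 h1 g x) (sq_nonneg r)
  rw [← e2] at e3
  refine le_of_mul_le_mul_left ?_ hs
  linarith

lemma two_t_grad2_noise_le {n : ℕ} {t : ℝ} (ht : 0 < t) (g : (Fin n → Bool) → ℂ)
    (x : Fin n → Bool) :
    2 * t * grad2 (noise (Real.exp (-t)) g) x ≤
      noise (Real.exp (-t)) (fun y => ‖g y‖ ^ 2) x := by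
  have h0 := (Real.exp_pos (-t)).le
  have h1 : Real.exp (-t) < 1 := by rw [Real.exp_lt_one_iff]; linarith
  have hN := noise_nonneg h0 h1.le (fun y => ‖g y‖ ^ 2) (fun _ => by positivity) x
  have hb := grad2_noise_le h0 h1 g x
  set r := Real.exp (-t) with hr
  have hs : 0 < 1 - r ^ 2 := by nlinarith
  have h2 : 2 * t * r ^ 2 ≤ 1 - r ^ 2 := by
    have h3 := Real.add_one_le_exp (2 * t)
    have h4 : Real.exp (2 * t) * r ^ 2 = 1 := by
      rw [hr, sq, ← Real.exp_add, ← Real.exp_add, Real.exp_eq_one_iff]; ring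
    have := mul_le_mul_of_nonneg_right h3 (sq_nonneg r)
    rw [h4] at this
    linarith
  refine le_of_mul_le_mul_left ?_ hs
  calc (1 - r ^ 2) * (2 * t * grad2 (noise r g) x) = 2 * t * ((1 - r ^ 2) * grad2 (noise r g) x) := by ring
    _ ≤ 2 * t * (r ^ 2 * noise r (fun y => ‖g y‖ ^ 2) x) := by gcongr
    _ = (2 * t * r ^ 2) * noise r (fun y => ‖g y‖ ^ 2) x := by ring
    _ ≤ _ := by gcongr

lemma sqrt_rpow {u : ℝ} (hu : 0 ≤ u) (q : ℝ) : (Real.sqrt u) ^ q = u ^ (q / 2) := by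
  rw [Real.sqrt_eq_rpow, ← Real.rpow_mul hu]; congr 1; ring

lemma sq_rpow_half {u : ℝ} (hu : 0 ≤ u) (q : ℝ) : (u ^ 2) ^ (q / 2) = u ^ q := by
  rw [← Real.rpow_natCast, ← Real.rpow_mul hu]; congr 1; push_cast; ring

lemma sum_grad_noise_rpow {n : ℕ} {t : ℝ} (ht : 0 < t) {q : ℝ} (hq : 2 ≤ q) (g : (Fin n → Bool) → ℂ) :
    ∑ x, (Real.sqrt (2 * t) * Real.sqrt (grad2 (noise (Real.exp (-t)) g) x)) ^ q ≤
      ∑ x, ‖g x‖ ^ q := by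
  have h0 := (Real.exp_pos (-t)).le
  have h1 : Real.exp (-t) ≤ 1 := by rw [Real.exp_le_one_iff]; linarith
  rw [← sum_noise (Real.exp (-t)) (fun x => ‖g x‖ ^ q)]
  refine Finset.sum_le_sum fun x _ => ?_
  have hg := grad2_nonneg (noise (Real.exp (-t)) g) x
  rw [← Real.sqrt_mul (by positivity), sqrt_rpow (by positivity)]
  refine (Real.rpow_le_rpow (by positivity) (two_t_grad2_noise_le ht g x) (by linarith)).trans ?_
  refine (noise_rpow h0 h1 (by linarith) _ (fun _ => by positivity) x).trans (le_of_eq ?_)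
  congr 1
  funext y
  exact sq_rpow_half (norm_nonneg _) q

lemma grad2_noise_le_noise {n : ℕ} {r : ℝ} (h0 : 0 ≤ r) (h1 : r ≤ 1) (f : (Fin n → Bool) → ℂ)
    (x : Fin n → Bool) : grad2 (noise r f) x ≤ noise r (grad2 f) x := by
  have : noise r (grad2 f) x = ∑ i, noise r (fun y => ‖pderiv i f y‖ ^ 2) x := by
    unfold noise grad2
    simp_rw [smul_eq_mul, Finset.mul_sum]
    rw [Finset.sum_comm]
  rw [this]
  refine Finset.sum_le_sum fun i _ => ?_
  rw [pderiv_noise]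
  have := norm_noise_rpow h0 h1 (s := 2) (by norm_num) (pderiv i f) x
  simpa only [Real.rpow_two] using this

lemma sum_grad2_noise_rpow {n : ℕ} {r : ℝ} (h0 : 0 ≤ r) (h1 : r ≤ 1) {s : ℝ} (hs : 1 ≤ s)
    (f : (Fin n → Bool) → ℂ) : ∑ x, grad2 (noise r f) x ^ s ≤ ∑ x, grad2 f x ^ s := by
  rw [← sum_noise r (fun x => grad2 f x ^ s)]
  refine Finset.sum_le_sum fun x _ => ?_
  exact (Real.rpow_le_rpow (grad2_nonneg _ _) (grad2_noise_le_noise h0 h1 f x) (by linarith)).trans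
    (noise_rpow h0 h1 hs _ (grad2_nonneg f) x)

/-! ### The duality map and the two main estimates -/

/-- The (unnormalized) duality map of `L_p`. -/
def dual {n : ℕ} (p : ℝ) (f : (Fin n → Bool) → ℂ) : (Fin n → Bool) → ℂ :=
  fun x => (‖f x‖ ^ (p - 2)) • f x

lemma norm_dual {n : ℕ} {p : ℝ} (hp : 1 < p) (f : (Fin n → Bool) → ℂ) (x : Fin n → Bool) :
    ‖dual p f x‖ = ‖f x‖ ^ (p - 1) := by
  unfold dual
  rw [norm_smul, Real.norm_of_nonneg (by positivity)]
  rcases (norm_nonneg (f x)).eq_or_lt with h | h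
  · rw [← h, mul_zero, Real.zero_rpow (by linarith)]
  · rw [← Real.rpow_add_one h.ne']; congr 1; ring

lemma norm_dual_rpow {n : ℕ} {p q : ℝ} (hpq : p.HolderConjugate q) (f : (Fin n → Bool) → ℂ)
    (x : Fin n → Bool) : ‖dual p f x‖ ^ q = ‖f x‖ ^ p := by
  rw [norm_dual hpq.lt, ← Real.rpow_mul (norm_nonneg _), hpq.sub_one_mul_conj]

lemma inner_dual {n : ℕ} {p : ℝ} (hp : 1 < p) (f : (Fin n → Bool) → ℂ) (x : Fin n → Bool) :
    inner ℝ (dual p f x) (f x) = ‖f x‖ ^ p := by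
  unfold dual
  rw [real_inner_smul_left, real_inner_self_eq_norm_sq]
  rcases (norm_nonneg (f x)).eq_or_lt with h | h
  · rw [← h, Real.zero_rpow (by linarith : p ≠ 0)]; simp
  · rw [← Real.rpow_natCast, ← Real.rpow_add h]; congr 1; push_cast; ring

lemma abs_pairing_dual_le {n : ℕ} {p q : ℝ} (hpq : p.HolderConjugate q) {r : ℝ} (h0 : 0 ≤ r)
    (h1 : r ≤ 1) (f : (Fin n → Bool) → ℂ) :
    |∑ x, inner ℝ (dual p f x) (noise r f x)| ≤ ∑ x, ‖f x‖ ^ p := by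
  have hp := hpq.lt
  have hp0 := hpq.pos
  have hq0 := hpq.symm.pos
  calc |∑ x, inner ℝ (dual p f x) (noise r f x)|
      ≤ ∑ x, |inner ℝ (dual p f x) (noise r f x)| := Finset.abs_sum_le_sum_abs _ _
    _ ≤ ∑ x, (‖f x‖ ^ p / q + ‖noise r f x‖ ^ p / p) := by
        refine Finset.sum_le_sum fun x _ => ?_
        refine (abs_real_inner_le_norm _ _).trans ?_
        refine (Real.young_inequality_of_nonneg (norm_nonneg _) (norm_nonneg _) hpq.symm).trans ?_
        rw [norm_dual_rpow hpq]
    _ = (∑ x, ‖f x‖ ^ p) / q + (∑ x, ‖noise r f x‖ ^ p) / p := by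
        rw [Finset.sum_add_distrib, Finset.sum_div, Finset.sum_div]
    _ ≤ (∑ x, ‖f x‖ ^ p) / q + (∑ x, ‖f x‖ ^ p) / p := by
        have := sum_norm_noise_rpow h0 h1 hp.le f
        gcongr
    _ = (∑ x, ‖f x‖ ^ p) * (p⁻¹ + q⁻¹) := by ring
    _ = _ := by rw [hpq.inv_add_inv_eq_one, mul_one]

lemma pairing_dual_half {n : ℕ} {p q : ℝ} (hpq : p.HolderConjugate q) {d m : ℕ} (hd : 1 ≤ d)
    (hm : 1 ≤ m) (f : (Fin n → Bool) → ℂ) (hdeg : degLE f (d + m)) (htail : tailSpace f d) :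
    ∑ x, inner ℝ (dual p f x) (noise (Real.exp (-(10 * m / d))) f x) ≤ 1 / 2 * ∑ x, ‖f x‖ ^ p := by
  obtain ⟨ρ, c, hρ, hc, hk⟩ := extrapolation d m hd hm
  have e : ∑ x, inner ℝ (dual p f x) (noise (Real.exp (-(10 * m / d))) f x) =
      ∑ j ∈ Finset.range (m + 1), c j * ∑ x, inner ℝ (dual p f x) (noise (ρ j) f x) := by
    simp_rw [pairing, Finset.mul_sum]
    rw [Finset.sum_comm]
    refine Finset.sum_congr rfl fun A _ => ?_
    by_cases hA : d ≤ A.card ∧ A.card ≤ d + m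
    · rw [hk _ hA.1 hA.2, Finset.sum_mul]
      exact Finset.sum_congr rfl fun j _ => by ring
    · have : coeff f A = 0 := by
        rcases not_and_or.1 hA with h | h
        · exact htail A (not_le.1 h)
        · exact hdeg A (not_le.1 h)
      simp [this]
  rw [e]
  calc ∑ j ∈ Finset.range (m + 1), c j * ∑ x, inner ℝ (dual p f x) (noise (ρ j) f x)
      ≤ ∑ j ∈ Finset.range (m + 1), |c j| * ∑ x, ‖f x‖ ^ p := by
        refine Finset.sum_le_sum fun j hj => ?_
        refine (le_abs_self _).trans ?_
        rw [abs_mul]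
        exact mul_le_mul_of_nonneg_left (abs_pairing_dual_le hpq (hρ j hj).1 (hρ j hj).2 f) (abs_nonneg _)
    _ = (∑ j ∈ Finset.range (m + 1), |c j|) * ∑ x, ‖f x‖ ^ p := by rw [Finset.sum_mul]
    _ ≤ _ := mul_le_mul_of_nonneg_right hc (Finset.sum_nonneg fun _ _ => by positivity)

/-- Comparison along the flow, singular version. -/
lemma flow_sqrt {h D : ℝ → ℝ} (hh : ∀ t, HasDerivAt h (-(D t)) t) {M : ℝ}
    (hM : ∀ t, 0 < t → Real.sqrt (2 * t) * D t ≤ M) {T : ℝ} (hT : 0 ≤ T) :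
    h 0 - h T ≤ M * Real.sqrt (2 * T) := by
  have hk : ∀ s : ℝ, HasDerivAt (fun s : ℝ => h (s ^ 2 / 2) + M * s) (-(D (s ^ 2 / 2)) * s + M) s := by
    intro s
    have h1 : HasDerivAt (fun s : ℝ => s ^ 2 / 2) s s := by
      have := ((hasDerivAt_id s).pow 2).div_const 2
      refine (HasDerivAt.congr_deriv this ?_)
      simp
    have h2 : HasDerivAt (fun s : ℝ => M * s) M s := by
      simpa using (hasDerivAt_id s).const_mul M
    exact ((hh (s ^ 2 / 2)).comp s h1).add h2
  have hmono : MonotoneOn (fun s : ℝ => h (s ^ 2 / 2) + M * s) (Set.Ici 0) := by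
    refine monotoneOn_of_deriv_nonneg (convex_Ici 0)
      (fun s _ => (hk s).continuousAt.continuousWithinAt)
      (fun s _ => (hk s).differentiableAt.differentiableWithinAt) ?_
    intro s hs
    rw [interior_Ici, Set.mem_Ioi] at hs
    rw [(hk s).deriv]
    have := hM (s ^ 2 / 2) (by positivity)
    rw [show 2 * (s ^ 2 / 2) = s ^ 2 by ring, Real.sqrt_sq hs.le] at this
    linarith
  have := hmono (Set.mem_Ici.2 le_rfl) (Set.mem_Ici.2 (Real.sqrt_nonneg (2 * T))) (Real.sqrt_nonneg _)
  simp only [Real.sq_sqrt (show 0 ≤ 2 * T by linarith)] at this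
  rw [show (0 : ℝ) ^ 2 / 2 = 0 by norm_num, show 2 * T / 2 = T by ring] at this
  linarith

/-- Comparison along the flow, bounded version. -/
lemma flow_lin {h D : ℝ → ℝ} (hh : ∀ t, HasDerivAt h (-(D t)) t) {M : ℝ}
    (hM : ∀ t, 0 < t → D t ≤ M) {T : ℝ} (hT : 0 ≤ T) :
    h 0 - h T ≤ M * T := by
  have hk : ∀ s : ℝ, HasDerivAt (fun s : ℝ => h s + M * s) (-(D s) + M) s := by
    intro s
    have h2 : HasDerivAt (fun s : ℝ => M * s) M s := by
      simpa using (hasDerivAt_id s).const_mul M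
    exact (hh s).add h2
  have hmono : MonotoneOn (fun s : ℝ => h s + M * s) (Set.Ici 0) := by
    refine monotoneOn_of_deriv_nonneg (convex_Ici 0)
      (fun s _ => (hk s).continuousAt.continuousWithinAt)
      (fun s _ => (hk s).differentiableAt.differentiableWithinAt) ?_
    intro s hs
    rw [interior_Ici, Set.mem_Ioi] at hs
    rw [(hk s).deriv]
    have := hM s hs
    linarith
  have := hmono (Set.mem_Ici.2 le_rfl) (Set.mem_Ici.2 hT) hT
  simp only [mul_zero, add_zero] at this
  linarith

/-- `1 < p ≤ 2`: bound on the Dirichlet form. -/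
lemma dirichlet_small {n : ℕ} {p q : ℝ} (hpq : p.HolderConjugate q) (hq : 2 ≤ q)
    (f : (Fin n → Bool) → ℂ) {t : ℝ} (ht : 0 < t) :
    Real.sqrt (2 * t) * (∑ i, ∑ x, inner ℝ (pderiv i (dual p f) x)
      (noise (Real.exp (-t)) (pderiv i f) x)) ≤
      (∑ x, Real.sqrt (grad2 f x) ^ p) ^ (1 / p) * (∑ x, ‖f x‖ ^ p) ^ (1 / q) := by
  have e : ∑ i, ∑ x, inner ℝ (pderiv i (dual p f) x) (noise (Real.exp (-t)) (pderiv i f) x) =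
      ∑ x, ∑ i, inner ℝ (pderiv i f x) (pderiv i (noise (Real.exp (-t)) (dual p f)) x) := by
    rw [Finset.sum_comm (s := (Finset.univ : Finset (Fin n → Bool)))]
    simp_rw [pderiv_noise]
    rw [dirichlet, dirichlet]
    simp_rw [real_inner_comm]
  rw [e, Finset.mul_sum]
  calc ∑ x, Real.sqrt (2 * t) * ∑ i, inner ℝ (pderiv i f x) (pderiv i (noise (Real.exp (-t)) (dual p f)) x)
      ≤ ∑ x, Real.sqrt (grad2 f x) *
          (Real.sqrt (2 * t) * Real.sqrt (grad2 (noise (Real.exp (-t)) (dual p f)) x)) := by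
        refine Finset.sum_le_sum fun x _ => ?_
        have : ∑ i, inner ℝ (pderiv i f x) (pderiv i (noise (Real.exp (-t)) (dual p f)) x) ≤
            Real.sqrt (grad2 f x) * Real.sqrt (grad2 (noise (Real.exp (-t)) (dual p f)) x) :=
          (Finset.sum_le_sum fun i _ => real_inner_le_norm _ _).trans
            (Real.sum_mul_le_sqrt_mul_sqrt _ _ _)
        calc _ ≤ Real.sqrt (2 * t) * (Real.sqrt (grad2 f x) *
              Real.sqrt (grad2 (noise (Real.exp (-t)) (dual p f)) x)) := by gcongr
          _ = _ := by ring
    _ ≤ _ := Real.inner_le_Lp_mul_Lq_of_nonneg _ hpq (fun _ _ => by positivity) (fun _ _ => by positivity)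
    _ ≤ _ := by
        have h := sum_grad_noise_rpow ht hq (dual p f)
        simp_rw [norm_dual_rpow hpq] at h
        have hq0 := hpq.symm.pos
        refine mul_le_mul_of_nonneg_left ?_ ?_
        · exact Real.rpow_le_rpow (Finset.sum_nonneg fun _ _ => by positivity) h (by positivity)
        · exact Real.rpow_nonneg (Finset.sum_nonneg fun _ _ => by positivity) _

lemma dual_diff_aux {s : ℝ} (hs : 0 ≤ s) (a b : ℂ) (hab : ‖b‖ ≤ ‖a‖) :
    ‖(‖a‖ ^ s) • a - (‖b‖ ^ s) • b‖ ≤ (s + 2) * (‖a‖ ^ s * ‖a - b‖) := by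
  rcases (norm_nonneg a).eq_or_lt with h | h
  · have ha : a = 0 := norm_eq_zero.1 h.symm
    have hb : b = 0 := by
      rw [← h] at hab; exact norm_le_zero_iff.1 hab
    simp [ha, hb]
  have e : (‖a‖ ^ s) • a - (‖b‖ ^ s) • b = (‖a‖ ^ s) • (a - b) + (‖a‖ ^ s - ‖b‖ ^ s) • b := by
    rw [smul_sub, sub_smul]; abel
  have hmono : ‖b‖ ^ s ≤ ‖a‖ ^ s := Real.rpow_le_rpow (norm_nonneg _) hab hs
  have hkey : (‖a‖ ^ s - ‖b‖ ^ s) * ‖b‖ ≤ (s + 1) * (‖a‖ ^ s * (‖a‖ - ‖b‖)) := by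
    have hx : 0 ≤ ‖b‖ / ‖a‖ := by positivity
    have hB := one_add_mul_self_le_rpow_one_add (s := ‖b‖ / ‖a‖ - 1) (by linarith) (p := s + 1) (by linarith)
    rw [add_sub_cancel, Real.div_rpow (norm_nonneg _) h.le, le_div_iff₀ (by positivity),
      Real.rpow_add_one h.ne', Real.rpow_add_one' (norm_nonneg _) (by linarith)] at hB
    have e2 : (1 + (s + 1) * (‖b‖ / ‖a‖ - 1)) * (‖a‖ ^ s * ‖a‖) =
      ‖a‖ ^ s * ‖a‖ - (s + 1) * (‖a‖ ^ s * (‖a‖ - ‖b‖)) := by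
      field_simp; ring
    rw [e2] at hB
    have : ‖a‖ ^ s * ‖b‖ ≤ ‖a‖ ^ s * ‖a‖ := by gcongr
    linarith
  have h3 : ‖a‖ - ‖b‖ ≤ ‖a - b‖ := norm_sub_norm_le a b
  calc ‖(‖a‖ ^ s) • a - (‖b‖ ^ s) • b‖ ≤ ‖a‖ ^ s * ‖a - b‖ + (‖a‖ ^ s - ‖b‖ ^ s) * ‖b‖ := by
        rw [e]
        refine (norm_add_le _ _).trans ?_
        rw [norm_smul, norm_smul, Real.norm_of_nonneg (by positivity),
          Real.norm_of_nonneg (sub_nonneg.2 hmono)]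
    _ ≤ ‖a‖ ^ s * ‖a - b‖ + (s + 1) * (‖a‖ ^ s * (‖a‖ - ‖b‖)) := by gcongr
    _ ≤ ‖a‖ ^ s * ‖a - b‖ + (s + 1) * (‖a‖ ^ s * ‖a - b‖) := by gcongr
    _ = _ := by ring

lemma dual_diff {s : ℝ} (hs : 0 ≤ s) (a b : ℂ) :
    ‖(‖a‖ ^ s) • a - (‖b‖ ^ s) • b‖ ≤ (s + 2) * ((‖a‖ ^ s + ‖b‖ ^ s) * ‖a - b‖) := by
  have ha : 0 ≤ ‖a‖ ^ s := by positivity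
  have hb : 0 ≤ ‖b‖ ^ s := by positivity
  rcases le_total ‖b‖ ‖a‖ with h | h
  · refine (dual_diff_aux hs a b h).trans ?_
    gcongr; linarith
  · rw [norm_sub_rev, norm_sub_rev a b]
    refine (dual_diff_aux hs b a h).trans ?_
    gcongr; linarith

lemma norm_pderiv_dual {n : ℕ} {p : ℝ} (hp : 2 < p) (f : (Fin n → Bool) → ℂ) (i : Fin n)
    (x : Fin n → Bool) :
    ‖pderiv i (dual p f) x‖ ≤ p * ((‖f x‖ ^ (p - 2) + ‖f (flp i x)‖ ^ (p - 2)) * ‖pderiv i f x‖) := by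
  have h := dual_diff (s := p - 2) (by linarith) (f x) (f (flp i x))
  rw [pderiv_eq, pderiv_eq, norm_smul, norm_smul]
  rw [sub_add_cancel] at h
  calc _ ≤ ‖(2 : ℝ)⁻¹‖ * (p * ((‖f x‖ ^ (p - 2) + ‖f (flp i x)‖ ^ (p - 2)) * ‖f x - f (flp i x)‖)) := by
        refine mul_le_mul_of_nonneg_left ?_ (norm_nonneg _)
        exact h
    _ = _ := by ring

lemma norm_pderiv_flp {n : ℕ} (f : (Fin n → Bool) → ℂ) (i : Fin n) (x : Fin n → Bool) :
    ‖pderiv i f (flp i x)‖ = ‖pderiv i f x‖ := by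
  rw [pderiv_eq, pderiv_eq, flp_flp, norm_smul, norm_smul, norm_sub_rev]

/-- `p > 2`: bound on the Dirichlet form. -/
lemma dirichlet_large {n : ℕ} {p : ℝ} (hp : 2 < p) (f : (Fin n → Bool) → ℂ) {r : ℝ} (h0 : 0 ≤ r)
    (h1 : r ≤ 1) :
    ∑ i, ∑ x, inner ℝ (pderiv i (dual p f) x) (noise r (pderiv i f) x) ≤
      2 * p * ((∑ x, ‖f x‖ ^ p) ^ ((p - 2) / p) * (∑ x, Real.sqrt (grad2 f x) ^ p) ^ (2 / p)) := by
  set F := noise r f with hF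
  have hol : ∀ u : (Fin n → Bool) → ℝ, (∀ x, 0 ≤ u x) →
      ∑ x, u x ^ (p / 2) ≤ ∑ x, Real.sqrt (grad2 f x) ^ p →
      ∑ x, ‖f x‖ ^ (p - 2) * u x ≤
        (∑ x, ‖f x‖ ^ p) ^ ((p - 2) / p) * (∑ x, Real.sqrt (grad2 f x) ^ p) ^ (2 / p) := by
    intro u hu hle
    have hc : (p / (p - 2)).HolderConjugate (p / 2) := by
      rw [Real.holderConjugate_iff]
      refine ⟨?_, ?_⟩
      · rw [lt_div_iff₀ (by linarith)]; linarith
      · rw [inv_div, inv_div, ← add_div, sub_add_cancel, div_self (by linarith)]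
    have := Real.inner_le_Lp_mul_Lq_of_nonneg Finset.univ hc (f := fun x => ‖f x‖ ^ (p - 2)) (g := u)
      (fun _ _ => by positivity) (fun x _ => hu x)
    refine this.trans ?_
    have e1 : ∀ x, (‖f x‖ ^ (p - 2)) ^ (p / (p - 2)) = ‖f x‖ ^ p := fun x => by
      rw [← Real.rpow_mul (norm_nonneg _), mul_div_cancel₀ _ (by linarith)]
    simp_rw [e1, one_div_div]
    refine mul_le_mul_of_nonneg_left ?_ ?_
    · exact Real.rpow_le_rpow (Finset.sum_nonneg fun x _ => Real.rpow_nonneg (hu x) _) hle (by positivity)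
    · exact Real.rpow_nonneg (Finset.sum_nonneg fun _ _ => by positivity) _
  have hG : ∑ x, grad2 f x ^ (p / 2) = ∑ x, Real.sqrt (grad2 f x) ^ p :=
    Finset.sum_congr rfl fun x _ => (sqrt_rpow (grad2_nonneg f x) p).symm
  have hf := hol (grad2 f) (grad2_nonneg f) hG.le
  have hFF := hol (grad2 F) (grad2_nonneg F)
    ((sum_grad2_noise_rpow h0 h1 (by linarith) f).trans hG.le)
  have hi : ∀ i, ∑ x, inner ℝ (pderiv i (dual p f) x) (noise r (pderiv i f) x) ≤
      p * ∑ x, ‖f x‖ ^ (p - 2) * (‖pderiv i f x‖ ^ 2 + ‖pderiv i F x‖ ^ 2) := by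
    intro i
    rw [← pderiv_noise, ← hF]
    calc ∑ x, inner ℝ (pderiv i (dual p f) x) (pderiv i F x)
        ≤ ∑ x, (p * (‖f x‖ ^ (p - 2) * (‖pderiv i f x‖ * ‖pderiv i F x‖)) +
            p * (‖f (flp i x)‖ ^ (p - 2) * (‖pderiv i f (flp i x)‖ * ‖pderiv i F (flp i x)‖))) := by
          refine Finset.sum_le_sum fun x _ => ?_
          refine (real_inner_le_norm _ _).trans ?_
          refine (mul_le_mul_of_nonneg_right (norm_pderiv_dual hp f i x) (norm_nonneg _)).trans ?_
          rw [norm_pderiv_flp, norm_pderiv_flp]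
          exact le_of_eq (by ring)
      _ = p * ∑ x, ‖f x‖ ^ (p - 2) * (2 * ‖pderiv i f x‖ * ‖pderiv i F x‖) := by
          rw [Finset.sum_add_distrib,
            sum_flp i (fun x => p * (‖f x‖ ^ (p - 2) * (‖pderiv i f x‖ * ‖pderiv i F x‖))),
            ← Finset.sum_add_distrib, Finset.mul_sum]
          exact Finset.sum_congr rfl fun x _ => by ring
      _ ≤ _ := by
          gcongr with x
          exact two_mul_le_add_sq _ _
  calc _ ≤ ∑ i, p * ∑ x, ‖f x‖ ^ (p - 2) * (‖pderiv i f x‖ ^ 2 + ‖pderiv i F x‖ ^ 2) :=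
        Finset.sum_le_sum fun i _ => hi i
    _ = p * (∑ x, ‖f x‖ ^ (p - 2) * grad2 f x + ∑ x, ‖f x‖ ^ (p - 2) * grad2 F x) := by
        rw [← Finset.mul_sum, Finset.sum_comm, ← Finset.sum_add_distrib]
        congr 1
        refine Finset.sum_congr rfl fun x _ => ?_
        unfold grad2
        rw [← Finset.mul_sum, Finset.sum_add_distrib, mul_add]
    _ ≤ p * ((∑ x, ‖f x‖ ^ p) ^ ((p - 2) / p) * (∑ x, Real.sqrt (grad2 f x) ^ p) ^ (2 / p) +
          (∑ x, ‖f x‖ ^ p) ^ ((p - 2) / p) * (∑ x, Real.sqrt (grad2 f x) ^ p) ^ (2 / p)) := by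
        have hp0 : 0 ≤ p := by linarith
        exact mul_le_mul_of_nonneg_left (add_le_add hf hFF) hp0
    _ = _ := by ring

lemma main_small {n : ℕ} {p : ℝ} (hp : 1 < p) (hp2 : p ≤ 2) {d m : ℕ} (hd : 1 ≤ d)
    (hm : 1 ≤ m) (f : (Fin n → Bool) → ℂ) (hdeg : degLE f (d + m)) (htail : tailSpace f d) :
    (∑ x, ‖f x‖ ^ p) ^ (1 / p) ≤
      2 * Real.sqrt (2 * (10 * m / d)) * (∑ x, Real.sqrt (grad2 f x) ^ p) ^ (1 / p) := by
  have hpq : p.HolderConjugate (p / (p - 1)) := Real.HolderConjugate.conjExponent hp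
  set q := p / (p - 1) with hq
  have hq2 : 2 ≤ q := by rw [hq, le_div_iff₀ (by linarith)]; linarith
  have hfl := flow_sqrt (fun t => hasDerivAt_pairing (dual p f) f t)
    (fun t ht => dirichlet_small hpq hq2 f ht) (T := 10 * m / d) (by positivity)
  have hhalf := pairing_dual_half hpq hd hm f hdeg htail
  simp only [neg_zero, Real.exp_zero, noise_one, inner_dual hp] at hfl
  set S := ∑ x, ‖f x‖ ^ p with hS
  set G := ∑ x, Real.sqrt (grad2 f x) ^ p with hG
  have hS0 : 0 ≤ S := Finset.sum_nonneg fun _ _ => by positivity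
  have hG0 : 0 ≤ G := Finset.sum_nonneg fun _ _ => by positivity
  rcases hS0.eq_or_lt with h | h
  · rw [← h, Real.zero_rpow (by positivity)]; positivity
  have e : S = S ^ (1 / p) * S ^ (1 / q) := by
    rw [← Real.rpow_add h, one_div, one_div, hpq.inv_add_inv_eq_one, Real.rpow_one]
  have hSq : 0 < S ^ (1 / q) := by positivity
  refine le_of_mul_le_mul_right ?_ hSq
  rw [← e]
  linarith

lemma main_large {n : ℕ} {p : ℝ} (hp : 2 < p) {d m : ℕ} (hd : 1 ≤ d)
    (hm : 1 ≤ m) (f : (Fin n → Bool) → ℂ) (hdeg : degLE f (d + m)) (htail : tailSpace f d) :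
    (∑ x, ‖f x‖ ^ p) ^ (1 / p) ≤
      Real.sqrt (4 * p * (10 * m / d)) * (∑ x, Real.sqrt (grad2 f x) ^ p) ^ (1 / p) := by
  have hp1 : 1 < p := by linarith
  have hpq : p.HolderConjugate (p / (p - 1)) := Real.HolderConjugate.conjExponent hp1
  have hfl := flow_lin (fun t => hasDerivAt_pairing (dual p f) f t)
    (fun t ht => dirichlet_large hp f (Real.exp_pos (-t)).le
      (by rw [Real.exp_le_one_iff]; linarith)) (T := 10 * m / d) (by positivity)
  have hhalf := pairing_dual_half hpq hd hm f hdeg htail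
  simp only [neg_zero, Real.exp_zero, noise_one, inner_dual hp1] at hfl
  set S := ∑ x, ‖f x‖ ^ p with hS
  set G := ∑ x, Real.sqrt (grad2 f x) ^ p with hG
  have hS0 : 0 ≤ S := Finset.sum_nonneg fun _ _ => by positivity
  have hG0 : 0 ≤ G := Finset.sum_nonneg fun _ _ => by positivity
  rcases hS0.eq_or_lt with h | h
  · rw [← h, Real.zero_rpow (by positivity)]; positivity
  have e : S = (S ^ (1 / p)) ^ 2 * S ^ ((p - 2) / p) := by
    rw [← Real.rpow_natCast, ← Real.rpow_mul hS0, ← Real.rpow_add h]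
    have : 1 / p * ((2 : ℕ) : ℝ) + (p - 2) / p = 1 := by
      push_cast; field_simp; ring
    rw [this, Real.rpow_one]
  have e2 : G ^ (2 / p) = (G ^ (1 / p)) ^ 2 := by
    rw [← Real.rpow_natCast, ← Real.rpow_mul hG0]
    congr 1; push_cast; ring
  have hSq : 0 < S ^ ((p - 2) / p) := by positivity
  have hsq : (S ^ (1 / p)) ^ 2 ≤ 4 * p * (10 * m / d) * (G ^ (1 / p)) ^ 2 := by
    refine le_of_mul_le_mul_right ?_ hSq
    rw [← e, ← e2]
    linarith
  refine le_of_sq_le_sq ?_ (by positivity)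
  rw [mul_pow, Real.sq_sqrt (by positivity)]
  exact hsq

lemma finish {n : ℕ} {p K : ℝ} (hp : 1 < p) (hK : 0 < K) {d m : ℕ} (hd : 1 ≤ d) (hm : 1 ≤ m)
    (f : (Fin n → Bool) → ℂ)
    (h : (∑ x, ‖f x‖ ^ p) ^ (1 / p) ≤
      Real.sqrt (K * (m / d)) * (∑ x, Real.sqrt (grad2 f x) ^ p) ^ (1 / p)) :
    (Real.sqrt K)⁻¹ * Real.sqrt ((d : ℝ) / m) * lpNorm p f ≤ gradLpNorm p f := by
  have hd' : (0 : ℝ) < d := by exact_mod_cast hd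
  have hm' : (0 : ℝ) < m := by exact_mod_cast hm
  unfold gradLpNorm lpNorm
  have e : ∀ x, ‖Real.sqrt (∑ i : Fin n, ‖pderiv i f x‖ ^ 2)‖ = Real.sqrt (grad2 f x) := fun x => by
    rw [Real.norm_of_nonneg (Real.sqrt_nonneg _)]; rfl
  simp_rw [e]
  rw [Real.mul_rpow (by positivity) (Finset.sum_nonneg fun _ _ => by positivity),
    Real.mul_rpow (by positivity) (Finset.sum_nonneg fun _ _ => by positivity)]
  have hone : (Real.sqrt K)⁻¹ * Real.sqrt ((d : ℝ) / m) * Real.sqrt (K * (m / d)) = 1 := by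
    rw [← Real.sqrt_inv, ← Real.sqrt_mul (by positivity), ← Real.sqrt_mul (by positivity)]
    rw [show K⁻¹ * ((d : ℝ) / m) * (K * (m / d)) = 1 by field_simp, Real.sqrt_one]
  have hc : 0 ≤ (Real.sqrt K)⁻¹ * Real.sqrt ((d : ℝ) / m) := by positivity
  have h2 := mul_le_mul_of_nonneg_left h hc
  rw [← mul_assoc, hone, one_mul] at h2
  have h3 := mul_le_mul_of_nonneg_left h2 (show 0 ≤ ((2 ^ n : ℝ)⁻¹) ^ (1 / p) by positivity)
  linarith

/-- **Reverse Bernstein–Markov inequality for the scalar discrete gradient.** -/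
theorem stmt16 (p : ℝ) (hp : 1 < p) :
    ∃ c : ℝ, 0 < c ∧
      ∀ n d m : ℕ, 1 ≤ d → 1 ≤ m → d + m ≤ n →
        ∀ f : (Fin n → Bool) → ℂ, degLE f (d + m) → tailSpace f d →
          c * Real.sqrt ((d : ℝ) / (m : ℝ)) * lpNorm p f ≤ gradLpNorm p f := by
  rcases le_or_gt p 2 with hp2 | hp2
  · refine ⟨(Real.sqrt 80)⁻¹, by positivity, fun n d m hd hm _ f hdeg htail => ?_⟩
    refine finish hp (by norm_num) hd hm f ?_
    refine (main_small hp hp2 hd hm f hdeg htail).trans (le_of_eq ?_)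
    congr 1
    have h4 : (2 : ℝ) = Real.sqrt (2 ^ 2) := (Real.sqrt_sq (by norm_num)).symm
    conv_lhs => enter [1]; rw [h4]
    rw [← Real.sqrt_mul (by norm_num)]
    congr 1; ring
  · refine ⟨(Real.sqrt (40 * p))⁻¹, by positivity, fun n d m hd hm _ f hdeg htail => ?_⟩
    refine finish hp (by positivity) hd hm f ?_
    refine (main_large hp2 hd hm f hdeg htail).trans (le_of_eq ?_)
    congr 2; ring

end HammingCube
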